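/- arXiv:1806.09726 — 2 statements merged into one kernel-verified Lean document; each statement's English description precedes it below -/
import Mathlib

section
/- Let m, n, N ≥ 1 be integers and p ∈ (0,1). Suppose there exist nonnegative integers c ≤ m/2 and d ≤ n/2 such that p^(C(m,2) − c(c−1)) · (2N)^(m−c) + (1−p)^(C(n,2) − d(d−1)) · (2N)^(n−d) ≤ 1/2, where C(k,2) = k(k−1)/2. Then r̃(m,n;p) > N; that is, every Builder strategy in the (m,n)-online Ramsey game against the random Painter with parameter p wins within N turns with probability less than 1/2. -/
open scoped Classical

namespace OnlineRamseyGame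

/-- A valid Builder strategy: it never builds a loop, and along any play the
edges built are pairwise distinct. -/
def ValidBuilder {V : Type*} (B : List Bool → Sym2 V) : Prop :=
  (∀ h : List Bool, ¬ (B h).IsDiag) ∧
  ∀ h : List Bool, ∀ i : ℕ, i < h.length → B (h.take i) ≠ B h

/-- The history (as a list) of the first `t` values of the color sequence `x`. -/
def histSeq (x : ℕ → Bool) (t : ℕ) : List Bool := (List.range t).map x

/-- Extend a finite color sequence to an infinite one (by `false`). -/
def extSeq {N : ℕ} (x : Fin N → Bool) : ℕ → Bool :=
  fun t => if h : t < N then x ⟨t, h⟩ else false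

/-- The probability of the outcome `x` when each turn is independently `true`
with probability `p` and `false` with probability `1 - p`. -/
noncomputable def weight (p : ℝ) {N : ℕ} (x : Fin N → Bool) : ℝ :=
  ∏ i, if x i then p else 1 - p

/-- The graph built by `edge` contains a monochromatic clique on `k` vertices in
color `col` within the first `N` turns. -/
def HasMonoClique {V : Type*} (edge : ℕ → Sym2 V) (color : ℕ → Bool)
    (N k : ℕ) (col : Bool) : Prop :=
  ∃ S : Finset V, S.card = k ∧
    ∀ u ∈ S, ∀ v ∈ S, u ≠ v → ∃ t, t < N ∧ edge t = s(u, v) ∧ color t = col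

/-- Builder strategy `B` wins the `(m,n)` game within `N` turns when Painter's
colors are given by the sequence `x` (red = `true`, blue = `false`). -/
def WinsOn (B : List Bool → Sym2 ℕ) (x : ℕ → Bool) (m n N : ℕ) : Prop :=
  HasMonoClique (fun t => B (histSeq x t)) x N m true ∨
  HasMonoClique (fun t => B (histSeq x t)) x N n false

/-- The probability that Builder strategy `B` wins the `(m,n)` game within `N`
turns against the random Painter with parameter `p`. -/
noncomputable def winProb (B : List Bool → Sym2 ℕ) (m n N : ℕ) (p : ℝ) : ℝ :=
  ∑ x : Fin N → Bool, weight p x * (if WinsOn B (extSeq x) m n N then 1 else 0)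

/-- The online Ramsey number `r̃(m,n;p)` against the random Painter with
parameter `p`: the least `N` such that some valid Builder strategy wins within
`N` turns with probability at least `1/2`. -/
noncomputable def onlineRamseyP (m n : ℕ) (p : ℝ) : ℕ :=
  sInf {N | ∃ B : List Bool → Sym2 ℕ, ValidBuilder B ∧ (1 : ℝ) / 2 ≤ winProb B m n N p}



theorem histSeq_cons {N : ℕ} (b : Bool) (y : Fin N → Bool) (t : ℕ) :
    histSeq (extSeq (Fin.cons b y : Fin (N + 1) → Bool)) (t + 1) = b :: histSeq (extSeq y) t := by
  unfold histSeq
  rw [List.range_succ_eq_map, List.map_cons, List.map_map]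
  congr 1
  apply List.map_congr_left
  intro s _
  simp only [extSeq, Function.comp, Nat.succ_eq_add_one, Nat.add_lt_add_iff_right]
  split_ifs with h
  · exact Fin.cons_succ (α := fun _ => Bool) b y ⟨s, h⟩
  · rfl

theorem histSeq_zero (x : ℕ → Bool) : histSeq x 0 = [] := rfl

theorem extSeq_cons_zero {N : ℕ} (b : Bool) (y : Fin N → Bool) :
    extSeq (Fin.cons b y : Fin (N + 1) → Bool) 0 = b := by
  simp [extSeq]

theorem extSeq_cons_succ {N : ℕ} (b : Bool) (y : Fin N → Bool) (t : ℕ) :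
    extSeq (Fin.cons b y : Fin (N + 1) → Bool) (t + 1) = extSeq y t := by
  simp only [extSeq, Nat.add_lt_add_iff_right]
  split_ifs with h
  · exact Fin.cons_succ (α := fun _ => Bool) b y ⟨t, h⟩
  · rfl

theorem weight_cons (p : ℝ) {N : ℕ} (b : Bool) (y : Fin N → Bool) :
    weight p (Fin.cons b y : Fin (N + 1) → Bool) = (if b then p else 1 - p) * weight p y := by
  simp [weight, Fin.prod_univ_succ]

theorem sum_cons {N : ℕ} (F : (Fin (N + 1) → Bool) → ℝ) :
    ∑ x, F x = ∑ y : Fin N → Bool, F (Fin.cons true y) + ∑ y : Fin N → Bool, F (Fin.cons false y) := by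
  rw [← (Fin.consEquiv (fun _ : Fin (N + 1) => Bool)).sum_comp, Fintype.sum_prod_type]
  simp [Fin.consEquiv]

theorem weight_sum (p : ℝ) (N : ℕ) : ∑ x : Fin N → Bool, weight p x = 1 := by
  induction N with
  | zero => simp [weight]
  | succ N ih =>
    rw [sum_cons]
    simp only [weight_cons, ← Finset.mul_sum, ih]
    simp

theorem weight_nonneg {p : ℝ} (hp : p ∈ Set.Ioo (0 : ℝ) 1) {N : ℕ} (x : Fin N → Bool) :
    0 ≤ weight p x := by
  apply Finset.prod_nonneg
  intro i _
  split_ifs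
  · exact hp.1.le
  · linarith [hp.2]

/-- All the checked turns have color `col`, and there are at least `K` of them. -/
def Ev (C : List Bool → Prop) (N K : ℕ) (col : Bool) (x : ℕ → Bool) : Prop :=
  (∀ t, t < N → C (histSeq x t) → x t = col) ∧
    K ≤ ((Finset.range N).filter fun t => C (histSeq x t)).card

/-- Probability of an event. -/
noncomputable def Pr (p : ℝ) (N : ℕ) (E : (ℕ → Bool) → Prop) : ℝ :=
  ∑ x : Fin N → Bool, weight p x * (if E (extSeq x) then 1 else 0)

theorem Pr_mono {p : ℝ} (hp : p ∈ Set.Ioo (0 : ℝ) 1) (N : ℕ) {E F : (ℕ → Bool) → Prop}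
    (h : ∀ x, E x → F x) : Pr p N E ≤ Pr p N F := by
  apply Finset.sum_le_sum
  intro x _
  apply mul_le_mul_of_nonneg_left _ (weight_nonneg hp x)
  by_cases hE : E (extSeq x)
  · simp [hE, h _ hE]
  · simp only [hE, if_false]
    split_ifs <;> norm_num

theorem Pr_or {p : ℝ} (hp : p ∈ Set.Ioo (0 : ℝ) 1) (N : ℕ) {E F : (ℕ → Bool) → Prop} :
    Pr p N (fun x => E x ∨ F x) ≤ Pr p N E + Pr p N F := by
  unfold Pr
  rw [← Finset.sum_add_distrib]
  apply Finset.sum_le_sum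
  intro x _
  rw [← mul_add]
  apply mul_le_mul_of_nonneg_left _ (weight_nonneg hp x)
  by_cases hE : E (extSeq x) <;> by_cases hF : F (extSeq x) <;> simp [hE, hF]

theorem Pr_union {ι : Type*} {p : ℝ} (hp : p ∈ Set.Ioo (0 : ℝ) 1) (N : ℕ) (D : Finset ι)
    (E : ι → (ℕ → Bool) → Prop) :
    Pr p N (fun x => ∃ i ∈ D, E i x) ≤ ∑ i ∈ D, Pr p N (E i) := by
  induction D using Finset.induction_on with
  | empty => simp [Pr]
  | insert a s ha ih =>
    rw [Finset.sum_insert ha]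
    refine le_trans (Pr_mono hp N (F := fun x => E a x ∨ ∃ i ∈ s, E i x) ?_)
      ((Pr_or hp N).trans (by linarith))
    rintro x ⟨i, hi, hx⟩
    rcases Finset.mem_insert.1 hi with rfl | hi
    · exact Or.inl hx
    · exact Or.inr ⟨i, hi, hx⟩

theorem Pr_cons (p : ℝ) (N : ℕ) (E : (ℕ → Bool) → Prop) :
    Pr p (N + 1) E =
      p * (∑ y : Fin N → Bool, weight p y *
        (if E (extSeq (Fin.cons true y : Fin (N + 1) → Bool)) then 1 else 0)) +
      (1 - p) * (∑ y : Fin N → Bool, weight p y *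
        (if E (extSeq (Fin.cons false y : Fin (N + 1) → Bool)) then 1 else 0)) := by
  unfold Pr
  rw [sum_cons, Finset.mul_sum, Finset.mul_sum]
  simp [weight_cons]

theorem Ev_cons (C : List Bool → Prop) (N K : ℕ) (col b : Bool) (y : Fin N → Bool) :
    Ev C (N + 1) K col (extSeq (Fin.cons b y : Fin (N + 1) → Bool)) ↔
      (C [] → b = col) ∧
        Ev (fun h => C (b :: h)) N (K - if C [] then 1 else 0) col (extSeq y) := by
  unfold Ev
  have h1 : ((Finset.range (N + 1)).filter fun t =>
      C (histSeq (extSeq (Fin.cons b y : Fin (N + 1) → Bool)) t)).card =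
      ((Finset.range N).filter fun t => C (b :: histSeq (extSeq y) t)).card +
        if C [] then 1 else 0 := by
    rw [Finset.card_filter, Finset.card_filter, Finset.sum_range_succ']
    simp only [histSeq_cons, histSeq_zero]
    congr!
  rw [h1, Nat.sub_le_iff_le_add, ← and_assoc]
  refine and_congr_left fun _ => ?_
  constructor
  · intro h
    refine ⟨fun hC => ?_, fun t ht hC => ?_⟩
    · simpa [extSeq_cons_zero] using h 0 (Nat.succ_pos _) (by simpa [histSeq_zero] using hC)
    · simpa [extSeq_cons_succ] using h (t + 1) (by omega) (by simpa [histSeq_cons] using hC)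
  · rintro ⟨h0, h⟩ t ht hC
    cases t with
    | zero => rw [extSeq_cons_zero]; exact h0 hC
    | succ t =>
      rw [extSeq_cons_succ]
      exact h t (by omega) (by simpa [histSeq_cons] using hC)

theorem Pr_Ev {p : ℝ} (hp : p ∈ Set.Ioo (0 : ℝ) 1) (N : ℕ) :
    ∀ (K : ℕ) (col : Bool) (C : List Bool → Prop),
      Pr p N (Ev C N K col) ≤ (if col then p else 1 - p) ^ K := by
  have hp0 := hp.1
  have hp1 := hp.2
  induction N with
  | zero =>
    intro K col C
    cases K with
    | zero => simp [Pr, Ev, weight]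
    | succ K =>
      simp only [Pr, Ev]
      simp
      split_ifs <;> apply pow_nonneg <;> linarith
  | succ N ih =>
    intro K col C
    rw [Pr_cons]
    simp only [Ev_cons]
    by_cases hC : C []
    · have hK : ∀ q : ℝ, 0 ≤ q → q ≤ 1 → q * q ^ (K - 1) ≤ q ^ K := by
        intro q h0 h1
        cases K with
        | zero => simpa using h1
        | succ K => rw [Nat.add_sub_cancel, pow_succ, mul_comm]
      cases col with
      | true =>
        have := ih (K - 1) true (fun h => C (true :: h))
        have h2 := hK p hp0.le hp1.le
        have h3 := mul_le_mul_of_nonneg_left this hp0.le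
        simp only [Pr] at h3
        simp [hC] at h3 ⊢
        linarith
      | false =>
        have := ih (K - 1) false (fun h => C (false :: h))
        have h2 := hK (1 - p) (by linarith) (by linarith)
        have h3 := mul_le_mul_of_nonneg_left this (by linarith : 0 ≤ 1 - p)
        simp only [Pr] at h3
        simp [hC] at h3 ⊢
        linarith
    · have h1 := mul_le_mul_of_nonneg_left (ih K col (fun h => C (true :: h))) hp0.le
      have h2 := mul_le_mul_of_nonneg_left (ih K col (fun h => C (false :: h)))
        (by linarith : 0 ≤ 1 - p)
      simp only [Pr] at h1 h2
      cases col <;> simp [hC] at h1 h2 ⊢ <;> linarith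

theorem ramsey (m n : ℕ) : ∃ R : ℕ, ∀ (S : Finset ℕ) (col : Sym2 ℕ → Bool), R ≤ S.card →
    (∃ T ⊆ S, T.card = m ∧ ∀ u ∈ T, ∀ v ∈ T, u ≠ v → col s(u, v) = true) ∨
    (∃ T ⊆ S, T.card = n ∧ ∀ u ∈ T, ∀ v ∈ T, u ≠ v → col s(u, v) = false) := by
  induction m generalizing n with
  | zero => exact ⟨0, fun S col _ => Or.inl ⟨∅, by simp⟩⟩
  | succ m ihm =>
    induction n with
    | zero => exact ⟨0, fun S col _ => Or.inr ⟨∅, by simp⟩⟩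
    | succ n ihn =>
      obtain ⟨R1, h1⟩ := ihm (n + 1)
      obtain ⟨R2, h2⟩ := ihn
      refine ⟨R1 + R2 + 1, fun S col hS => ?_⟩
      obtain ⟨v, hv⟩ : S.Nonempty := Finset.card_pos.1 (by omega)
      have hc := Finset.card_filter_add_card_filter_not (s := S.erase v)
        (fun u => col s(v, u) = true)
      rw [Finset.card_erase_of_mem hv] at hc
      have ext : ∀ (T : Finset ℕ) (b : Bool),
          T ⊆ S.erase v → (∀ u ∈ T, col s(v, u) = b) →
          (∀ u ∈ T, ∀ w ∈ T, u ≠ w → col s(u, w) = b) →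
          ∃ T' ⊆ S, T'.card = T.card + 1 ∧ ∀ u ∈ T', ∀ w ∈ T', u ≠ w → col s(u, w) = b := by
        intro T b hT h1 h2
        refine ⟨insert v T, ?_, ?_, ?_⟩
        · intro u hu
          rcases Finset.mem_insert.1 hu with rfl | hu
          · exact hv
          · exact Finset.mem_of_mem_erase (hT hu)
        · exact Finset.card_insert_of_notMem fun h => by simpa using hT h
        · intro u hu w hw huw
          rcases Finset.mem_insert.1 hu with hu | hu <;>
            rcases Finset.mem_insert.1 hw with hw | hw
          · exact absurd (hu.trans hw.symm) huw
          · rw [hu]; exact h1 _ hw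
          · rw [hw, Sym2.eq_swap]; exact h1 _ hu
          · exact h2 _ hu _ hw huw
      by_cases hR : R1 ≤ ((S.erase v).filter fun u => col s(v, u) = true).card
      · rcases h1 _ col hR with ⟨T, hT, hTc, h⟩ | ⟨T, hT, hTc, h⟩
        · left
          obtain ⟨T', a, b, c⟩ := ext T true (fun u hu => (Finset.mem_filter.1 (hT hu)).1)
            (fun u hu => (Finset.mem_filter.1 (hT hu)).2) h
          exact ⟨T', a, by omega, c⟩
        · exact Or.inr ⟨T, fun u hu => Finset.mem_of_mem_erase (Finset.mem_filter.1 (hT hu)).1,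
            hTc, h⟩
      · rcases h2 ((S.erase v).filter fun u => ¬ col s(v, u) = true) col (by omega) with
          ⟨T, hT, hTc, h⟩ | ⟨T, hT, hTc, h⟩
        · exact Or.inl ⟨T, fun u hu => Finset.mem_of_mem_erase (Finset.mem_filter.1 (hT hu)).1,
            hTc, h⟩
        · right
          obtain ⟨T', a, b, c⟩ := ext T false (fun u hu => (Finset.mem_filter.1 (hT hu)).1)
            (fun u hu => by simpa using (Finset.mem_filter.1 (hT hu)).2) h
          exact ⟨T', a, by omega, c⟩

theorem histSeq_length (x : ℕ → Bool) (t : ℕ) : (histSeq x t).length = t := by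
  simp [histSeq]

theorem nonempty_set (m n : ℕ) (p : ℝ) :
    ∃ N, ∃ B : List Bool → Sym2 ℕ, ValidBuilder B ∧ (1 : ℝ) / 2 ≤ winProb B m n N p := by
  have : Infinite {e : Sym2 ℕ // ¬ e.IsDiag} := by
    refine Infinite.of_injective (fun k : ℕ => ⟨s(0, k + 1), by simp⟩) ?_
    intro a b h
    simpa using h
  obtain ⟨e⟩ : Nonempty (ℕ ≃ {e : Sym2 ℕ // ¬ e.IsDiag}) := nonempty_equiv_of_countable
  obtain ⟨R, hR⟩ := ramsey m n
  let g : Sym2 ℕ → ℕ := fun z => if h : z.IsDiag then 0 else e.symm ⟨z, h⟩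
  have hg : ∀ u v : ℕ, u ≠ v → (e (g s(u, v)) : Sym2 ℕ) = s(u, v) := by
    intro u v huv
    have : ¬ (s(u, v)).IsDiag := by simpa using huv
    simp [g, this]
  let N := (Finset.range R ×ˢ Finset.range R).sup (fun q => g s(q.1, q.2)) + 1
  have hN : ∀ u ∈ Finset.range R, ∀ v ∈ Finset.range R, g s(u, v) < N := by
    intro u hu v hv
    exact Nat.lt_succ_of_le (Finset.le_sup (f := fun q : ℕ × ℕ => g s(q.1, q.2))
      (Finset.mk_mem_product hu hv))
  refine ⟨N, fun h => e h.length, ⟨fun h => (e h.length).2, ?_⟩, ?_⟩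
  · intro h i hi heq
    have := e.injective (Subtype.ext heq)
    rw [List.length_take] at this
    omega
  · have hw : ∀ x : ℕ → Bool, WinsOn (fun h => e h.length) x m n N := by
      intro x
      rcases hR (Finset.range R) (fun z => x (g z)) (by simp) with ⟨T, hT, hc, h⟩ | ⟨T, hT, hc, h⟩
      · exact Or.inl ⟨T, hc, fun u hu v hv huv => ⟨g s(u, v), hN u (hT hu) v (hT hv),
          by simpa [histSeq_length] using hg u v huv, h u hu v hv huv⟩⟩
      · exact Or.inr ⟨T, hc, fun u hu v hv huv => ⟨g s(u, v), hN u (hT hu) v (hT hv),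
          by simpa [histSeq_length] using hg u v huv, h u hu v hv huv⟩⟩
    unfold winProb
    simp only [hw, if_true, mul_one, weight_sum]
    norm_num

/-- Index type for the vertices of the clique: `c` pairs and `r` singles. -/
abbrev Idx (c r : ℕ) := (Fin c × Bool) ⊕ Fin r

theorem two_pow_lt_of {X Y M : ℕ} (hX : X < M) (hY : Y < M) (h : X ≠ Y) :
    2 ^ X + 2 ^ Y < 2 ^ M := by
  wlog hXY : X < Y generalizing X Y
  · rw [add_comm]
    exact this hY hX h.symm (by omega)
  have h1 : 2 ^ X < 2 ^ Y := Nat.pow_lt_pow_right (by norm_num) hXY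
  have h2 : 2 ^ (Y + 1) ≤ 2 ^ M := Nat.pow_le_pow_right (by norm_num) hY
  rw [pow_succ] at h2
  omega

theorem le_of_sum_le_two {ι : Type*} [Fintype ι] (F G : ι → ℕ) (i j : ι) (hij : i ≠ j)
    (h : ∀ k, k ≠ i → k ≠ j → F k = G k) (hs : ∑ k, F k ≤ ∑ k, G k) :
    F i + F j ≤ G i + G j := by
  have h1 : ∑ k ∈ ({i, j} : Finset ι), ((F k : ℤ) - G k) = ∑ k, ((F k : ℤ) - G k) := by
    apply Finset.sum_subset (Finset.subset_univ _)
    intro k _ hk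
    simp only [Finset.mem_insert, Finset.mem_singleton, not_or] at hk
    rw [h k hk.1 hk.2, sub_self]
  rw [Finset.sum_pair hij, Finset.sum_sub_distrib] at h1
  zify at hs ⊢
  linarith

theorem le_of_sum_le_one {ι : Type*} [Fintype ι] (F G : ι → ℕ) (i : ι)
    (h : ∀ k, k ≠ i → F k = G k) (hs : ∑ k, F k ≤ ∑ k, G k) :
    F i ≤ G i := by
  by_contra hlt
  push Not at hlt
  refine absurd hs (not_le.2 (Finset.sum_lt_sum (fun k _ => ?_) ⟨i, Finset.mem_univ _, hlt⟩))
  by_cases hk : k = i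
  · subst hk; exact hlt.le
  · exact (h k hk).ge

theorem exists_min_matching {α : Type*} [Fintype α] (c r : ℕ)
    (hα : Fintype.card α = 2 * c + r) (W : Sym2 α → ℕ)
    (hW : ∀ e e', ¬ e.IsDiag → ¬ e'.IsDiag → W e = W e' → e = e') :
    ∃ f : Idx c r ≃ α,
      (∀ i b a, W s(f (.inl (i, true)), f (.inl (i, false))) <
        W s(f (.inl (i, b)), f (.inr a))) ∧
      (∀ i j, i ≠ j → ∀ b,
        max (W s(f (.inl (i, true)), f (.inl (i, false))))
          (W s(f (.inl (j, true)), f (.inl (j, false)))) <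
        max (W s(f (.inl (i, false)), f (.inl (j, b))))
          (W s(f (.inl (i, true)), f (.inl (j, !b))))) := by
  have hne : Nonempty (Idx c r ≃ α) := by
    rw [← Fintype.card_eq]
    simp [hα]
    ring
  obtain ⟨f, hf⟩ := Finite.exists_min (fun f : Idx c r ≃ α =>
    ∑ i, 2 ^ W s(f (.inl (i, true)), f (.inl (i, false))))
  have hinj : ∀ x y, f x = f y ↔ x = y := fun x y => f.injective.eq_iff
  refine ⟨f, ?_, ?_⟩
  · intro i b a
    have h := hf ((Equiv.swap (Sum.inl (i, !b)) (Sum.inr a)).trans f)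
    have h2 := le_of_sum_le_one _ _ i (fun k hk => by
      simp [Equiv.swap_apply_def, hk]) h
    have h3 : W s(f (.inl (i, true)), f (.inl (i, false))) ≤
        W s(f (.inl (i, b)), f (.inr a)) := by
      have h4 := (Nat.pow_le_pow_iff_right (by norm_num : 1 < 2)).1 h2
      cases b
      · simpa [Equiv.swap_apply_def, Sym2.eq_swap] using h4
      · simpa [Equiv.swap_apply_def] using h4
    refine lt_of_le_of_ne h3 fun heq => ?_
    have := hW _ _ (by simp [hinj]) (by simp [hinj]) heq
    simp [hinj] at this
  · intro i j hij b
    have h := hf ((Equiv.swap (Sum.inl (i, true)) (Sum.inl (j, b))).trans f)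
    have h2 := le_of_sum_le_two _ _ i j hij (fun k hk hk' => by
      simp [Equiv.swap_apply_def, hk, hk']) h
    have h3 : 2 ^ W s(f (.inl (i, true)), f (.inl (i, false))) +
        2 ^ W s(f (.inl (j, true)), f (.inl (j, false))) ≤
        2 ^ W s(f (.inl (i, false)), f (.inl (j, b))) +
        2 ^ W s(f (.inl (i, true)), f (.inl (j, !b))) := by
      have e1 : s(f (.inl (i, false)), f (.inl (j, b))) = s(f (.inl (j, b)), f (.inl (i, false))) :=
        Sym2.eq_swap
      have e2 : s(f (.inl (i, true)), f (.inl (j, !b))) = s(f (.inl (j, !b)), f (.inl (i, true))) :=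
        Sym2.eq_swap
      cases b
      · rw [e1, e2]
        simpa [Equiv.swap_apply_def, hij, hij.symm] using h2
      · rw [e1]
        simpa [Equiv.swap_apply_def, hij, hij.symm] using h2
    by_contra hlt
    have n1 : W s(f (.inl (i, false)), f (.inl (j, b))) ≠
        W s(f (.inl (i, true)), f (.inl (j, !b))) := fun heq => by
      have := hW _ _ (by simp [hinj, hij]) (by simp [hinj, hij]) heq
      simp [hinj, hij] at this
    have n2 : ∀ b' b'' k, k = i ∨ k = j → W s(f (.inl (i, b')), f (.inl (j, b''))) ≠
        W s(f (.inl (k, true)), f (.inl (k, false))) := fun b' b'' k hk heq => by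
      have := hW _ _ (by simp [hinj, hij]) (by simp [hinj]) heq
      rcases hk with rfl | rfl
      · simp [hinj, hij.symm] at this
      · simp [hinj, hij] at this
    have n3 := n2 false b i (Or.inl rfl)
    have n4 := n2 false b j (Or.inr rfl)
    have n5 := n2 true (!b) i (Or.inl rfl)
    have n6 := n2 true (!b) j (Or.inr rfl)
    generalize W s(f (.inl (i, true)), f (.inl (i, false))) = w1 at *
    generalize W s(f (.inl (j, true)), f (.inl (j, false))) = w2 at *
    generalize W s(f (.inl (i, false)), f (.inl (j, b))) = x at *
    generalize W s(f (.inl (i, true)), f (.inl (j, !b))) = y at *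
    have hlt' := not_lt.1 hlt
    have hx : x ≤ max w1 w2 := (le_max_left _ _).trans hlt'
    have hy : y ≤ max w1 w2 := (le_max_right _ _).trans hlt'
    rcases le_total w1 w2 with hw | hw
    · rw [max_eq_right hw] at hx hy
      have := two_pow_lt_of (lt_of_le_of_ne hx n4) (lt_of_le_of_ne hy n6) n1
      have := Nat.pow_pos (n := w1) (by norm_num : 0 < 2)
      linarith
    · rw [max_eq_left hw] at hx hy
      have := two_pow_lt_of (lt_of_le_of_ne hx n3) (lt_of_le_of_ne hy n5) n1
      have := Nat.pow_pos (n := w2) (by norm_num : 0 < 2)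
      linarith

/-- An edge built after the identification of all its paired endpoints. -/
def Good {α : Type*} {c r : ℕ} (W : Sym2 α → ℕ) (f : Idx c r ≃ α) (e : Sym2 (Idx c r)) : Prop :=
  ∀ i b, (Sum.inl (i, b) : Idx c r) ∈ e →
    W s(f (.inl (i, true)), f (.inl (i, false))) ≤ W (e.map f)

theorem count_good {α : Type*} {c r : ℕ} (W : Sym2 α → ℕ) (f : Idx c r ≃ α)
    (h1 : ∀ i b a, W s(f (.inl (i, true)), f (.inl (i, false))) <
        W s(f (.inl (i, b)), f (.inr a)))
    (h2 : ∀ i j, i ≠ j → ∀ b,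
        max (W s(f (.inl (i, true)), f (.inl (i, false))))
          (W s(f (.inl (j, true)), f (.inl (j, false)))) <
        max (W s(f (.inl (i, false)), f (.inl (j, b))))
          (W s(f (.inl (i, true)), f (.inl (j, !b))))) :
    (2 * c + r).choose 2 - c * (c - 1) ≤
      (Finset.univ.filter fun e : Sym2 (Idx c r) => ¬ e.IsDiag ∧ Good W f e).card := by
  let w : Fin c → ℕ := fun i => W s(f (.inl (i, true)), f (.inl (i, false)))
  let E : Fin c → Bool → Fin c → Bool → Sym2 (Idx c r) := fun i b j b' =>
    s(.inl (i, b), .inl (j, b'))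
  let g : Fin c × Fin c → Sym2 (Idx c r) := fun q =>
    if W ((E q.1 false q.2 (decide (q.2 < q.1))).map f) < max (w q.1) (w q.2) then
      E q.1 false q.2 (decide (q.2 < q.1))
    else E q.1 true q.2 (!decide (q.2 < q.1))
  have H : ∀ i j b, i ≠ j → W ((E i b j (b ^^ decide (j < i))).map f) < max (w i) (w j) →
      E i b j (b ^^ decide (j < i)) = g (i, j) := by
    intro i j b hij hlt
    cases b with
    | false =>
      rw [Bool.false_xor] at hlt ⊢
      simp only [g]
      rw [if_pos hlt]
    | true =>
      rw [Bool.true_xor] at hlt ⊢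
      simp only [g]
      rw [if_neg]
      intro hlt'
      have := h2 i j hij (decide (j < i))
      exact absurd (this.trans (max_lt hlt' hlt)) (lt_irrefl _)
  have hbad : (Finset.univ.filter fun e : Sym2 (Idx c r) => ¬ e.IsDiag ∧ ¬ Good W f e) ⊆
      (Finset.univ : Finset (Fin c)).offDiag.image g := by
    intro e he
    obtain ⟨hd, hb⟩ := (Finset.mem_filter.1 he).2
    unfold Good at hb
    push Not at hb
    obtain ⟨i, b, hmem, hlt⟩ := hb
    obtain ⟨y, rfl⟩ := hmem
    rcases y with ⟨j, b'⟩ | a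
    · by_cases hij : i = j
      · subst hij
        exfalso
        have hbb : b ≠ b' := by
          rintro rfl
          simp at hd
        cases b <;> cases b' <;> simp [Sym2.map_mk] at hbb hlt
        rw [Sym2.eq_swap] at hlt
        exact lt_irrefl _ hlt
      · rw [Finset.mem_image]
        by_cases hb : b' = (b ^^ decide (j < i))
        · refine ⟨(i, j), by simpa using hij, ?_⟩
          subst hb
          exact (H i j b hij (lt_of_lt_of_le hlt (le_max_left _ _))).symm
        · have hb' : b = (b' ^^ decide (i < j)) := by
            rcases lt_or_gt_of_ne hij with h | h
            · simp only [h, not_lt_of_gt h, decide_true, decide_false] at hb ⊢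
              cases b <;> cases b' <;> simp at hb ⊢
            · simp only [h, not_lt_of_gt h, decide_true, decide_false] at hb ⊢
              cases b <;> cases b' <;> simp at hb ⊢
          refine ⟨(j, i), by simpa using Ne.symm hij, ?_⟩
          rw [Sym2.eq_swap] at hlt ⊢
          subst hb'
          exact (H j i b' (Ne.symm hij) (lt_of_lt_of_le hlt (le_max_right _ _))).symm
    · exact absurd hlt (not_lt.2 (h1 i b a).le)
  have hcard := Finset.card_le_card hbad
  have hcard2 := (hcard.trans Finset.card_image_le)
  rw [Finset.offDiag_card, Finset.card_univ, Fintype.card_fin] at hcard2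
  have htot : (Finset.univ.filter fun e : Sym2 (Idx c r) => ¬ e.IsDiag).card =
      (2 * c + r).choose 2 := by
    have := Sym2.card_subtype_not_diag (α := Idx c r)
    rw [Fintype.card_subtype] at this
    have h3 : Fintype.card (Idx c r) = 2 * c + r := by simp; ring
    rw [h3] at this
    convert this
  have hsplit := Finset.card_filter_add_card_filter_not
    (s := Finset.univ.filter fun e : Sym2 (Idx c r) => ¬ e.IsDiag) (fun e => Good W f e)
  rw [Finset.filter_filter, Finset.filter_filter, htot] at hsplit
  rw [Nat.mul_sub, mul_one]
  omega

/-- The two endpoints of an edge, in some order. -/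
noncomputable def ends (e : Sym2 ℕ) (b : Bool) : ℕ := if b then (Quot.out e).1 else (Quot.out e).2

theorem exists_ends {e : Sym2 ℕ} {v : ℕ} (h : v ∈ e) : ∃ b, ends e b = v := by
  have he : s((Quot.out e).1, (Quot.out e).2) = e := Quot.out_eq e
  rw [← he, Sym2.mem_iff] at h
  rcases h with h | h
  · exact ⟨true, by simp [ends, h]⟩
  · exact ⟨false, by simp [ends, h]⟩

/-- The next edge has both endpoints already identified by the data `T`, `A`. -/
def Chk (B : List Bool → Sym2 ℕ) (T : Finset ℕ) (A : Finset (ℕ × Bool)) (h : List Bool) : Prop :=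
  ∀ v ∈ B h, (∃ s ∈ T, s ≤ h.length ∧ v ∈ B (h.take s)) ∨
    ∃ q ∈ A, q.1 ≤ h.length ∧ v = ends (B (h.take q.1)) q.2

theorem histSeq_take (x : ℕ → Bool) {s t : ℕ} (h : s ≤ t) :
    (histSeq x t).take s = histSeq x s := by
  unfold histSeq
  rw [← List.map_take, List.take_range, min_eq_left h]

theorem edge_inj {B : List Bool → Sym2 ℕ} (hB : ValidBuilder B) (x : ℕ → Bool) {s t : ℕ}
    (h : B (histSeq x s) = B (histSeq x t)) : s = t := by
  have key : ∀ s t, s < t → B (histSeq x s) ≠ B (histSeq x t) := by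
    intro s t hst
    have := hB.2 (histSeq x t) s (by rwa [histSeq_length])
    rwa [histSeq_take x hst.le] at this
  rcases lt_trichotomy s t with hlt | heq | hlt
  · exact absurd h (key _ _ hlt)
  · exact heq
  · exact absurd h.symm (key _ _ hlt)

/-- The family of identification data. -/
noncomputable def fam (N c r : ℕ) : Finset (Finset ℕ × Finset (ℕ × Bool)) :=
  (Finset.range N).powersetCard c ×ˢ
    (Finset.range N ×ˢ (Finset.univ : Finset Bool)).powersetCard r

theorem clique_Ev {B : List Bool → Sym2 ℕ} (hB : ValidBuilder B) (x : ℕ → Bool) (N c r : ℕ)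
    (col : Bool) (hm : 2 ≤ 2 * c + r)
    (hc : HasMonoClique (fun t => B (histSeq x t)) x N (2 * c + r) col) :
    ∃ D ∈ fam N c r, Ev (Chk B D.1 D.2) N ((2 * c + r).choose 2 - c * (c - 1)) col x := by
  obtain ⟨S, hS, hcl⟩ := hc
  have hW0 : ∀ e : Sym2 S, ∃ t, ¬ e.IsDiag → t < N ∧ B (histSeq x t) = e.map (↑) ∧ x t = col := by
    intro e
    induction e using Sym2.ind with
    | _ u v =>
      by_cases huv : u = v
      · exact ⟨0, fun h => absurd (by simpa using huv) h⟩
      · obtain ⟨t, ht⟩ := hcl u u.2 v v.2 (fun h => huv (Subtype.ext h))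
        exact ⟨t, fun _ => ht⟩
  choose W hW using hW0
  have hWinj : ∀ e e', ¬ e.IsDiag → ¬ e'.IsDiag → W e = W e' → e = e' := by
    intro e e' he he' h
    have h1 := (hW e he).2.1
    rw [h, (hW e' he').2.1] at h1
    exact (Sym2.map.injective Subtype.val_injective h1).symm
  obtain ⟨f, hf1, hf2⟩ := exists_min_matching c r (by simpa using hS) W hWinj
  have hgood := count_good W f hf1 hf2
  have hmnd : ∀ e : Sym2 (Idx c r), ¬ e.IsDiag → ¬ (e.map f).IsDiag := by
    intro e he
    rwa [Sym2.isDiag_map f.injective]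
  have hi : ∀ i : Fin c, ¬ (s(f (.inl (i, true)), f (.inl (i, false)))).IsDiag := by
    intro i
    simp
  -- first appearance of the single vertices
  have hap : ∀ v : S, ∃ t, t < N ∧ (v : ℕ) ∈ B (histSeq x t) := by
    intro v
    obtain ⟨u, hu, huv⟩ := Finset.exists_mem_ne (by omega : 1 < S.card) (v : ℕ)
    obtain ⟨t, ht, he, _⟩ := hcl v v.2 u hu huv.symm
    exact ⟨t, ht, by simp only at he; rw [he]; simp⟩
  have hap2 : ∀ a : Fin r, ∃ q : ℕ × Bool, q.1 < N ∧
      ends (B (histSeq x q.1)) q.2 = f (.inr a) ∧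
      ∀ t, (f (.inr a) : ℕ) ∈ B (histSeq x t) → q.1 ≤ t := by
    intro a
    obtain ⟨h1, h2⟩ := Nat.find_spec (hap (f (.inr a)))
    obtain ⟨b, hb⟩ := exists_ends h2
    refine ⟨(Nat.find (hap (f (.inr a))), b), h1, hb, fun t ht => ?_⟩
    by_contra hlt
    push Not at hlt
    exact Nat.find_min (hap (f (.inr a))) hlt ⟨hlt.trans h1, ht⟩
  choose q hqN hqe hqmin using hap2
  let T : Finset ℕ := Finset.univ.image fun i : Fin c =>
    W s(f (.inl (i, true)), f (.inl (i, false)))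
  let A : Finset (ℕ × Bool) := Finset.univ.image q
  have hT : T ∈ (Finset.range N).powersetCard c := by
    rw [Finset.mem_powersetCard]
    constructor
    · intro t ht
      obtain ⟨i, _, rfl⟩ := Finset.mem_image.1 ht
      exact Finset.mem_range.2 (hW _ (hi i)).1
    · rw [Finset.card_image_of_injective, Finset.card_univ, Fintype.card_fin]
      intro i j hij
      have := hWinj _ _ (hi i) (hi j) hij
      simpa using this
  have hA : A ∈ (Finset.range N ×ˢ (Finset.univ : Finset Bool)).powersetCard r := by
    rw [Finset.mem_powersetCard]
    constructor
    · intro t ht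
      obtain ⟨a, _, rfl⟩ := Finset.mem_image.1 ht
      simpa using hqN a
    · rw [Finset.card_image_of_injective, Finset.card_univ, Fintype.card_fin]
      intro a a' h
      have h1 := hqe a
      rw [h, hqe a'] at h1
      simpa using (f.injective (Subtype.ext h1)).symm
  refine ⟨(T, A), Finset.mk_mem_product hT hA, ?_, ?_⟩
  · intro t ht hC
    have hmem : ∀ v ∈ B (histSeq x t), v ∈ S := by
      intro v hv
      rcases hC v hv with ⟨s, hs, hst, hvs⟩ | ⟨s, hs, hst, hvs⟩
      · rw [histSeq_length] at hst
        rw [histSeq_take x hst] at hvs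
        obtain ⟨i, _, rfl⟩ := Finset.mem_image.1 hs
        rw [(hW _ (hi i)).2.1, Sym2.map_mk, Sym2.mem_iff] at hvs
        rcases hvs with h | h <;> rw [h] <;> exact Subtype.property _
      · rw [histSeq_length] at hst
        rw [histSeq_take x hst] at hvs
        obtain ⟨a, _, rfl⟩ := Finset.mem_image.1 hs
        rw [hvs, hqe a]
        exact Subtype.property _
    have hd := hB.1 (histSeq x t)
    have key : ∀ e, B (histSeq x t) = e → x t = col := by
      intro e
      induction e using Sym2.ind with
      | _ u v =>
        intro he
        rw [he] at hmem hd
        obtain ⟨t', _, he', hcol⟩ := hcl u (hmem u (by simp)) v (hmem v (by simp))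
          (by simpa using hd)
        have : t' = t := edge_inj hB x (he'.trans he.symm)
        rwa [this] at hcol
    exact key _ rfl
  · refine hgood.trans ?_
    apply Finset.card_le_card_of_injOn (fun e => W (e.map f))
    · intro e he
      obtain ⟨hd, hg⟩ := (Finset.mem_filter.1 he).2
      obtain ⟨hlt, hed, _⟩ := hW _ (hmnd e hd)
      refine Finset.mem_coe.2 (Finset.mem_filter.2 ⟨Finset.mem_range.2 hlt, ?_⟩)
      intro v hv
      rw [histSeq_length]
      have hv0 := hv
      rw [hed, Sym2.map_map, Sym2.mem_map] at hv
      obtain ⟨k, hk, rfl⟩ := hv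
      rcases k with ⟨i, b⟩ | a
      · left
        have hle := hg i b hk
        refine ⟨_, Finset.mem_image_of_mem _ (Finset.mem_univ i), hle, ?_⟩
        rw [histSeq_take x hle, (hW _ (hi i)).2.1, Sym2.map_mk, Sym2.mem_iff]
        cases b
        · exact Or.inr rfl
        · exact Or.inl rfl
      · right
        have hle := hqmin a _ hv0
        refine ⟨q a, Finset.mem_image_of_mem _ (Finset.mem_univ a), hle, ?_⟩
        rw [histSeq_take x hle, hqe a]
        rfl
    · intro e he e' he' h
      have hd := (Finset.mem_filter.1 (Finset.mem_coe.1 he)).2.1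
      have hd' := (Finset.mem_filter.1 (Finset.mem_coe.1 he')).2.1
      exact Sym2.map.injective f.injective (hWinj _ _ (hmnd e hd) (hmnd e' hd') h)

theorem Pr_clique {B : List Bool → Sym2 ℕ} (hB : ValidBuilder B) {p : ℝ}
    (hp : p ∈ Set.Ioo (0 : ℝ) 1) (N c r : ℕ) (col : Bool) (hm : 2 ≤ 2 * c + r) :
    Pr p N (fun x => HasMonoClique (fun t => B (histSeq x t)) x N (2 * c + r) col) ≤
      (fam N c r).card * (if col then p else 1 - p) ^ ((2 * c + r).choose 2 - c * (c - 1)) := by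
  refine (Pr_mono hp N fun x hx => clique_Ev hB x N c r col hm hx).trans
    ((Pr_union hp N (fam N c r) fun D => Ev (Chk B D.1 D.2) N _ col).trans ?_)
  rw [← nsmul_eq_mul]
  exact Finset.sum_le_card_nsmul _ _ _ fun D _ => Pr_Ev hp N _ col _

theorem fam_card_lt {M N c r : ℕ} (hMN : M ≤ N) (hN : 1 ≤ N) (hm : 2 ≤ 2 * c + r) :
    (fam M c r).card < (2 * N) ^ (c + r) := by
  have h0 : (fam M c r).card = M.choose c * (2 * M).choose r := by
    unfold fam
    rw [Finset.card_product, Finset.card_powersetCard, Finset.card_powersetCard,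
      Finset.card_product]
    simp [mul_comm]
  rw [h0, pow_add]
  have h1 : M.choose c * (2 * M).choose r ≤ N.choose c * (2 * N).choose r :=
    Nat.mul_le_mul (Nat.choose_le_choose c hMN) (Nat.choose_le_choose r (by omega))
  refine lt_of_le_of_lt h1 ?_
  have hr : (2 * N).choose r ≤ (2 * N) ^ r := Nat.choose_le_pow _ _
  rcases Nat.eq_zero_or_pos c with rfl | hc
  · simp only [Nat.choose_zero_right, pow_zero, one_mul]
    have h2 := Nat.descFactorial_eq_factorial_mul_choose (2 * N) r
    have h3 := Nat.descFactorial_le_pow (2 * N) r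
    have h4 : 2 ≤ r.factorial := (by omega : 2 ≤ r).trans (Nat.self_le_factorial r)
    have h5 : 0 < (2 * N) ^ r := Nat.pow_pos (by omega)
    by_contra hlt
    push Not at hlt
    nlinarith
  · have h2 : N.choose c ≤ N ^ c := Nat.choose_le_pow _ _
    have h3 : N ^ c < (2 * N) ^ c := Nat.pow_lt_pow_left (by omega) (by omega)
    exact Nat.mul_lt_mul_of_lt_of_le (lt_of_le_of_lt h2 h3) hr (Nat.pow_pos (by omega))

theorem choose_sub {c r : ℕ} : c * (c - 1) ≤ (2 * c + r).choose 2 := by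
  have h1 : (2 * c).choose 2 ≤ (2 * c + r).choose 2 := Nat.choose_le_choose 2 (by omega)
  refine le_trans ?_ h1
  rw [Nat.choose_two_right]
  rw [Nat.le_div_iff_mul_le (by norm_num)]
  have : c - 1 ≤ 2 * c - 1 := by omega
  nlinarith [Nat.mul_le_mul_left (2 * c) this]

theorem term_ge_two {m c N : ℕ} {q : ℝ} (hq : 0 < q) (hN : 1 ≤ N) (hm : m = 1)
    (hc : (c : ℝ) ≤ (m : ℝ) / 2) :
    2 ≤ q ^ ((m.choose 2 : ℝ) - (c : ℝ) * ((c : ℝ) - 1)) *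
      ((2 * N : ℕ) : ℝ) ^ ((m : ℝ) - (c : ℝ)) := by
  have hc0 : c = 0 := by
    subst hm
    by_contra h
    have : (1 : ℝ) ≤ c := by exact_mod_cast Nat.one_le_iff_ne_zero.2 h
    norm_num at hc
    linarith
  subst hm hc0
  have : (1 : ℝ) ≤ N := by exact_mod_cast hN
  simp
  linarith

theorem term_bound {B : List Bool → Sym2 ℕ} (hB : ValidBuilder B) {p : ℝ}
    (hp : p ∈ Set.Ioo (0 : ℝ) 1) {M N m c : ℕ} (hMN : M ≤ N) (hN : 1 ≤ N) (hm : 2 ≤ m)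
    (hc : (c : ℝ) ≤ (m : ℝ) / 2) (col : Bool) :
    Pr p M (fun x => HasMonoClique (fun t => B (histSeq x t)) x M m col) <
      (if col then p else 1 - p) ^ ((m.choose 2 : ℝ) - (c : ℝ) * ((c : ℝ) - 1)) *
      ((2 * N : ℕ) : ℝ) ^ ((m : ℝ) - (c : ℝ)) := by
  have hcm : 2 * c ≤ m := by
    have : (2 * c : ℝ) ≤ m := by linarith
    exact_mod_cast this
  obtain ⟨r, rfl⟩ := Nat.exists_eq_add_of_le hcm
  refine lt_of_le_of_lt (Pr_clique hB hp M c r col hm) ?_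
  have hq : 0 < (if col then p else 1 - p) := by
    split_ifs
    · exact hp.1
    · linarith [hp.2]
  have e1 : (((2 * c + r).choose 2 : ℕ) : ℝ) - (c : ℝ) * ((c : ℝ) - 1) =
      (((2 * c + r).choose 2 - c * (c - 1) : ℕ) : ℝ) := by
    rw [Nat.cast_sub choose_sub]
    cases c <;> simp
  have e2 : ((2 * c + r : ℕ) : ℝ) - (c : ℝ) = ((c + r : ℕ) : ℝ) := by
    push_cast; ring
  rw [e1, e2, Real.rpow_natCast, Real.rpow_natCast, mul_comm]
  apply mul_lt_mul_of_pos_left _ (pow_pos hq _)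
  exact_mod_cast fam_card_lt hMN hN hm

theorem stmt11 (m n N : ℕ) (p : ℝ) (hm : 1 ≤ m) (hn : 1 ≤ n) (hN : 1 ≤ N)
    (hp : p ∈ Set.Ioo (0 : ℝ) 1)
    (h : ∃ c d : ℕ, (c : ℝ) ≤ (m : ℝ) / 2 ∧ (d : ℝ) ≤ (n : ℝ) / 2 ∧
      p ^ ((m.choose 2 : ℝ) - (c : ℝ) * ((c : ℝ) - 1)) * ((2 * N : ℕ) : ℝ) ^ ((m : ℝ) - (c : ℝ)) +
        (1 - p) ^ ((n.choose 2 : ℝ) - (d : ℝ) * ((d : ℝ) - 1)) *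
          ((2 * N : ℕ) : ℝ) ^ ((n : ℝ) - (d : ℝ)) ≤ 1 / 2) :
    N < onlineRamseyP m n p := by
  obtain ⟨c, d, hc, hd, hle⟩ := h
  have hp1 : 0 < 1 - p := by linarith [hp.2]
  have hpos : ∀ q a b : ℝ, 0 < q → 0 ≤ q ^ a * ((2 * N : ℕ) : ℝ) ^ b := fun q a b hq =>
    mul_nonneg (Real.rpow_nonneg hq.le _) (Real.rpow_nonneg (Nat.cast_nonneg _) _)
  have hm2 : 2 ≤ m := by
    by_contra hlt
    have h1 := term_ge_two hp.1 hN (by omega : m = 1) hc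
    have h2 := hpos (1 - p) ((n.choose 2 : ℝ) - (d : ℝ) * ((d : ℝ) - 1)) ((n : ℝ) - (d : ℝ)) hp1
    linarith
  have hn2 : 2 ≤ n := by
    by_contra hlt
    have h1 := term_ge_two hp1 hN (by omega : n = 1) hd
    have h2 := hpos p ((m.choose 2 : ℝ) - (c : ℝ) * ((c : ℝ) - 1)) ((m : ℝ) - (c : ℝ)) hp.1
    linarith
  have hmem := Nat.sInf_mem (s := {N | ∃ B : List Bool → Sym2 ℕ, ValidBuilder B ∧
    (1 : ℝ) / 2 ≤ winProb B m n N p}) (nonempty_set m n p)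
  change ∃ B : List Bool → Sym2 ℕ, ValidBuilder B ∧
    (1 : ℝ) / 2 ≤ winProb B m n (onlineRamseyP m n p) p at hmem
  by_contra hlt
  push Not at hlt
  obtain ⟨B, hB, hwin⟩ := hmem
  generalize onlineRamseyP m n p = M at *
  have h1 := term_bound hB hp hlt hN hm2 hc true
  have h2 := term_bound hB hp hlt hN hn2 hd false
  have h3 : winProb B m n M p ≤ _ := Pr_or hp M
    (E := fun x => HasMonoClique (fun t => B (histSeq x t)) x M m true)
    (F := fun x => HasMonoClique (fun t => B (histSeq x t)) x M n false)
  simp only [if_true, Bool.false_eq_true, if_false] at h1 h2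
  linarith

end OnlineRamseyGame
end

section
/- For each integer n ≥ 2, let p = 20·log(n)/n, let r = ⌊10⁻⁶·n²/(log n)²⌋, and let G be the Erdős–Rényi random graph G(r,p). Then the probability that there exists a set S of n vertices of G such that more than n²/10 unordered pairs of vertices of S have a common neighbor outside S tends to 0 as n → ∞. Here log denotes the natural logarithm. -/
open scoped Classical

namespace OnlineRamseyGame

open MeasureTheory

/-- The Bernoulli measure on `Bool` with success probability `p`. -/
noncomputable def bern (p : ℝ) : Measure Bool :=
  ENNReal.ofReal p • Measure.dirac true + ENNReal.ofReal (1 - p) • Measure.dirac false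

instance (p : ℝ) : IsFiniteMeasure (bern p) := by
  constructor
  simp [bern, Measure.add_apply, Measure.smul_apply]

/-- The Erdős–Rényi measure: each pair of vertices is an edge independently with
probability `p`. -/
noncomputable def gnp (r : ℕ) (p : ℝ) : Measure (Sym2 (Fin r) → Bool) :=
  Measure.pi fun _ => bern p

/-- The number of unordered pairs of distinct vertices of `S` having a common
neighbor outside `S` in the graph with edge indicator `ω`. -/
noncomputable def badPairCount (r : ℕ) (S : Finset (Fin r)) (ω : Sym2 (Fin r) → Bool) : ℕ :=
  (Finset.univ.filter (fun e : Sym2 (Fin r) =>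
    ¬ e.IsDiag ∧ (∀ v ∈ e, v ∈ S) ∧ ∃ w, w ∉ S ∧ ∀ v ∈ e, ω s(w, v) = true)).card

noncomputable def rr (n : ℕ) : ℕ := ⌊(n : ℝ) ^ 2 / (10 ^ 6 * (Real.log n) ^ 2)⌋₊

noncomputable def pp (n : ℕ) : ℝ := 20 * Real.log n / n


section Helpers
open ProbabilityTheory

theorem bern_prob {p : ℝ} (h0 : 0 ≤ p) (h1 : p ≤ 1) : IsProbabilityMeasure (bern p) := by
  constructor
  simp only [bern, Measure.add_apply, Measure.smul_apply, smul_eq_mul, measure_univ, mul_one]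
  rw [← ENNReal.ofReal_add h0 (by linarith)]
  simp

theorem gnp_prob {r : ℕ} {p : ℝ} (h0 : 0 ≤ p) (h1 : p ≤ 1) :
    IsProbabilityMeasure (gnp r p) := by
  have := bern_prob h0 h1
  unfold gnp
  infer_instance

theorem gnp_int {r : ℕ} {p : ℝ} (h0 : 0 ≤ p) (h1 : p ≤ 1) (f : (Sym2 (Fin r) → Bool) → ℝ) :
    Integrable f (gnp r p) := by
  have := gnp_prob (r := r) h0 h1
  exact Integrable.of_finite

theorem gnp_mul {r : ℕ} {p : ℝ} (h0 : 0 ≤ p) (h1 : p ≤ 1) (T1 T2 : Finset (Sym2 (Fin r)))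
    (hT : Disjoint T1 T2) (g1 g2 : (Sym2 (Fin r) → Bool) → ℝ)
    (hg1 : ∀ ω ω', (∀ e ∈ T1, ω e = ω' e) → g1 ω = g1 ω')
    (hg2 : ∀ ω ω', (∀ e ∈ T2, ω e = ω' e) → g2 ω = g2 ω') :
    ∫ ω, g1 ω * g2 ω ∂(gnp r p) = (∫ ω, g1 ω ∂(gnp r p)) * ∫ ω, g2 ω ∂(gnp r p) := by
  have := bern_prob h0 h1
  have := gnp_prob (r := r) h0 h1
  have hind : iIndepFun (fun (e : Sym2 (Fin r)) (ω : Sym2 (Fin r) → Bool) => ω e) (gnp r p) :=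
    iIndepFun_pi (X := fun _ x => x) (fun _ => aemeasurable_id)
  have h := hind.indepFun_finset T1 T2 hT (fun i => measurable_pi_apply i)
  let φ1 : (T1 → Bool) → ℝ := fun x => g1 (fun e => if h : e ∈ T1 then x ⟨e, h⟩ else false)
  let φ2 : (T2 → Bool) → ℝ := fun x => g2 (fun e => if h : e ∈ T2 then x ⟨e, h⟩ else false)
  have h2 := h.comp (φ := φ1) (ψ := φ2) (measurable_of_countable _) (measurable_of_countable _)
  have e1 : φ1 ∘ (fun (a : Sym2 (Fin r) → Bool) (i : T1) => a i) = g1 := by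
    funext ω
    apply hg1
    intro e he
    simp [he]
  have e2 : φ2 ∘ (fun (a : Sym2 (Fin r) → Bool) (i : T2) => a i) = g2 := by
    funext ω
    apply hg2
    intro e he
    simp [he]
  rw [e1, e2] at h2
  exact h2.integral_mul_eq_mul_integral (gnp_int h0 h1 _).aestronglyMeasurable
    (gnp_int h0 h1 _).aestronglyMeasurable

/-- number of neighbours of `w` in `T` -/
noncomputable def dd {r : ℕ} (w : Fin r) (T : Finset (Fin r)) (ω : Sym2 (Fin r) → Bool) : ℕ :=
  (T.filter (fun v => ω s(w, v) = true)).card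

theorem dd_congr {r : ℕ} (w : Fin r) (T : Finset (Fin r)) (ω ω' : Sym2 (Fin r) → Bool)
    (h : ∀ e ∈ T.image (fun v => s(w, v)), ω e = ω' e) : dd w T ω = dd w T ω' := by
  unfold dd
  congr 1
  apply Finset.filter_congr
  intro v hv
  rw [h _ (Finset.mem_image_of_mem _ hv)]

theorem one_mgf {r : ℕ} {p : ℝ} (h0 : 0 ≤ p) (h1 : p ≤ 1) (e : Sym2 (Fin r)) (t : ℝ) :
    ∫ ω, Real.exp (t * (if ω e = true then 1 else 0)) ∂(gnp r p) ≤
      Real.exp (p * (Real.exp t - 1)) := by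
  have := bern_prob h0 h1
  have hmp : MeasurePreserving (Function.eval e) (gnp r p) (bern p) :=
    measurePreserving_eval (fun _ => bern p) e
  have hh : ∫ ω, Real.exp (t * (if ω e = true then 1 else 0)) ∂(gnp r p) =
      ∫ b, Real.exp (t * (if b = true then 1 else 0)) ∂(bern p) := by
    rw [← hmp.map_eq, integral_map hmp.measurable.aemeasurable
      (measurable_of_countable _).aestronglyMeasurable]
  rw [hh, bern, integral_add_measure
    (Integrable.smul_measure Integrable.of_finite ENNReal.ofReal_ne_top)
    (Integrable.smul_measure Integrable.of_finite ENNReal.ofReal_ne_top),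
    integral_smul_measure, integral_smul_measure, integral_dirac, integral_dirac]
  rw [ENNReal.toReal_ofReal h0, ENNReal.toReal_ofReal (by linarith)]
  have := Real.add_one_le_exp (p * (Real.exp t - 1))
  simp
  linarith

theorem dd_mgf {r : ℕ} {p : ℝ} (h0 : 0 ≤ p) (h1 : p ≤ 1) (w : Fin r) (T : Finset (Fin r)) (t : ℝ) :
    ∫ ω, Real.exp (t * dd w T ω) ∂(gnp r p) ≤ Real.exp (T.card * (p * (Real.exp t - 1))) := by
  have := gnp_prob (r := r) h0 h1
  induction T using Finset.induction_on with
  | empty => simp [dd]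
  | insert v T hv ih =>
    have e1 : ∀ ω : Sym2 (Fin r) → Bool, Real.exp (t * dd w (insert v T) ω) =
        Real.exp (t * (if ω s(w, v) = true then 1 else 0)) * Real.exp (t * dd w T ω) := by
      intro ω
      rw [← Real.exp_add]
      congr 1
      unfold dd
      rw [Finset.filter_insert]
      split_ifs with h
      · rw [Finset.card_insert_of_notMem (by simp [hv])]
        push_cast
        ring
      · ring
    simp_rw [e1]
    rw [gnp_mul h0 h1 {s(w, v)} (T.image (fun v => s(w, v)))]
    · rw [Finset.card_insert_of_notMem hv]
      push_cast
      rw [add_mul, one_mul, add_comm, Real.exp_add]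
      exact mul_le_mul (one_mgf h0 h1 _ _) ih (integral_nonneg fun _ => (Real.exp_pos _).le)
        (Real.exp_pos _).le
    · rw [Finset.disjoint_singleton_left]
      simp only [Finset.mem_image, not_exists, not_and]
      intro x hx h
      rw [Sym2.congr_right] at h
      exact hv (h ▸ hx)
    · intro ω ω' h
      rw [h _ (Finset.mem_singleton_self _)]
    · intro ω ω' h
      rw [dd_congr w T ω ω' h]

theorem sum_mgf {r : ℕ} {p : ℝ} (h0 : 0 ≤ p) (h1 : p ≤ 1) (S W : Finset (Fin r))
    (hSW : Disjoint S W) (H : ℕ → ℝ) (K : ℝ)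
    (hK : ∀ w, ∫ ω, Real.exp (H (dd w S ω)) ∂(gnp r p) ≤ K) :
    ∫ ω, Real.exp (∑ w ∈ W, H (dd w S ω)) ∂(gnp r p) ≤ K ^ W.card := by
  have := gnp_prob (r := r) h0 h1
  induction W using Finset.induction_on with
  | empty => simp
  | insert w W hw ih =>
    have hd := Finset.disjoint_insert_right.1 hSW
    have ih := ih hd.2
    simp_rw [Finset.sum_insert hw, Real.exp_add]
    rw [gnp_mul h0 h1 (S.image (fun v => s(w, v)))
      (W.biUnion fun w => S.image (fun v => s(w, v)))]
    · rw [Finset.card_insert_of_notMem hw, pow_succ, mul_comm]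
      exact mul_le_mul ih (hK w) (integral_nonneg fun _ => (Real.exp_pos _).le)
        ((integral_nonneg fun _ => (Real.exp_pos _).le).trans ih)
    · rw [Finset.disjoint_left]
      intro e he he'
      simp only [Finset.mem_image, Finset.mem_biUnion] at he he'
      obtain ⟨v, hv, rfl⟩ := he
      obtain ⟨w', hw', v', hv', h⟩ := he'
      rw [Sym2.eq_iff] at h
      rcases h with ⟨rfl, _⟩ | ⟨rfl, _⟩
      · exact hw hw'
      · exact Finset.disjoint_left.1 hd.2 hv hw'
    · intro ω ω' h
      rw [dd_congr w S ω ω' h]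
    · intro ω ω' h
      congr 1
      apply Finset.sum_congr rfl
      intro w hw
      rw [dd_congr w S ω ω' fun e he => h e (Finset.mem_biUnion.2 ⟨w, hw, he⟩)]

theorem bad_le {r : ℕ} (S : Finset (Fin r)) (ω : Sym2 (Fin r) → Bool) :
    (badPairCount r S ω : ℝ) ≤ ∑ w ∈ Sᶜ, (dd w S ω : ℝ) ^ 2 / 2 := by
  have h1 : badPairCount r S ω ≤ ∑ w ∈ Sᶜ, (dd w S ω).choose 2 := by
    unfold badPairCount dd
    simp_rw [← Sym2.card_image_offDiag]
    refine le_trans (Finset.card_le_card ?_) Finset.card_biUnion_le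
    intro e he
    induction e using Sym2.ind with
    | _ x y =>
    simp at he
    obtain ⟨hxy, ⟨hx, hy⟩, w, hw, hwx, hwy⟩ := he
    simp only [Finset.mem_biUnion, Finset.mem_image, Finset.mem_compl]
    refine ⟨w, hw, (x, y), ?_, rfl⟩
    simp [*]
  calc (badPairCount r S ω : ℝ) ≤ ((∑ w ∈ Sᶜ, (dd w S ω).choose 2 : ℕ) : ℝ) := by
        exact_mod_cast h1
    _ ≤ _ := by
        push_cast
        apply Finset.sum_le_sum
        intro w _
        rw [Nat.cast_choose_two]
        have : (0 : ℝ) ≤ dd w S ω := Nat.cast_nonneg _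
        nlinarith

theorem exp_pt {x L D : ℝ} {d : ℕ} (hL : 1 ≤ L) (hx : 600000 * L ^ 3 ≤ x)
    (hD : D = x / (10000 * L)) (hd : (d : ℝ) ≤ D) :
    Real.exp (30 * L / x * ((d : ℝ) ^ 2 / 2)) ≤
      1 + 12000 * L ^ 3 / x * Real.exp (1 / (10 * L) * d)
        + Real.exp (-(100 * L)) * Real.exp (1 * d) := by
  have hx0 : 0 < x := lt_of_lt_of_le (by positivity) hx
  have hL0 : 0 < L := by linarith
  have hd0 : (0 : ℝ) ≤ d := Nat.cast_nonneg _
  rcases le_total (d : ℝ) (200 * L) with h | h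
  · have hy1 : 30 * L / x * ((d : ℝ) ^ 2 / 2) ≤ 1 := by
      rw [div_mul_eq_mul_div, div_le_one hx0]
      have : (d : ℝ) ^ 2 ≤ (200 * L) ^ 2 := by gcongr
      nlinarith
    have hy0 : 0 ≤ 30 * L / x * ((d : ℝ) ^ 2 / 2) := by positivity
    have h2 : Real.exp (30 * L / x * ((d : ℝ) ^ 2 / 2)) ≤
        1 + 2 * (30 * L / x * ((d : ℝ) ^ 2 / 2)) := by
      have := Real.abs_exp_sub_one_le (x := 30 * L / x * ((d : ℝ) ^ 2 / 2))
        (by rw [abs_of_nonneg hy0]; exact hy1)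
      rw [abs_of_nonneg hy0] at this
      have := (abs_le.1 this).2
      linarith
    have h3 : (d : ℝ) ^ 2 ≤ 400 * L ^ 2 * Real.exp (1 / (10 * L) * d) := by
      have h4 := Real.add_one_le_exp ((d : ℝ) / (20 * L))
      have h5 : (d : ℝ) / (20 * L) ≤ Real.exp ((d : ℝ) / (20 * L)) := by linarith
      have h6 : ((d : ℝ) / (20 * L)) ^ 2 ≤ Real.exp ((d : ℝ) / (20 * L)) ^ 2 := by gcongr
      rw [← Real.exp_nat_mul, div_pow, div_le_iff₀ (by positivity)] at h6
      have e : ((2 : ℕ) : ℝ) * ((d : ℝ) / (20 * L)) = 1 / (10 * L) * d := by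
        push_cast; field_simp; ring
      rw [e] at h6
      nlinarith
    have h7 : 2 * (30 * L / x * ((d : ℝ) ^ 2 / 2)) ≤
        12000 * L ^ 3 / x * Real.exp (1 / (10 * L) * d) := by
      calc 2 * (30 * L / x * ((d : ℝ) ^ 2 / 2)) = 30 * L / x * (d : ℝ) ^ 2 := by ring
        _ ≤ 30 * L / x * (400 * L ^ 2 * Real.exp (1 / (10 * L) * d)) := by gcongr
        _ = _ := by ring
    have : 0 ≤ Real.exp (-(100 * L)) * Real.exp (1 * d) := by positivity
    linarith
  · have h8 : 30 * L / x * ((d : ℝ) ^ 2 / 2) ≤ -(100 * L) + 1 * d := by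
      have : 30 * L / x * ((d : ℝ) ^ 2 / 2) ≤ 30 * L / x * (D * d / 2) := by
        rw [pow_two]; gcongr
      have e : 30 * L / x * (D * d / 2) = 0.0015 * d := by
        rw [hD]; field_simp; ring
      linarith
    have h9 := Real.exp_le_exp.2 h8
    rw [Real.exp_add] at h9
    have : 0 ≤ 12000 * L ^ 3 / x * Real.exp (1 / (10 * L) * d) := by positivity
    linarith

theorem K_bound {n r : ℕ} {p L D : ℝ} (hL : 1 ≤ L) (hx : 600000 * L ^ 3 ≤ (n : ℝ))
    (hD : D = (n : ℝ) / (10000 * L)) (hp : p = 20 * L / n) (h1 : p ≤ 1)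
    (S : Finset (Fin r)) (hS : S.card = n) (w : Fin r) :
    ∫ ω, Real.exp ((fun d : ℕ => 30 * L / n * (if (d : ℝ) ≤ D then (d : ℝ) ^ 2 / 2 else 0))
      (dd w S ω)) ∂(gnp r p) ≤ Real.exp (252000 * L ^ 3 / n + Real.exp (-(60 * L))) := by
  have hL0 : 0 < L := by linarith
  have hn0 : (0 : ℝ) < n := lt_of_lt_of_le (by positivity) hx
  have h0 : 0 ≤ p := by rw [hp]; positivity
  have := gnp_prob (r := r) h0 h1
  have hnp : ∀ t : ℝ, (S.card : ℝ) * (p * (Real.exp t - 1)) = 20 * L * (Real.exp t - 1) := by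
    intro t
    rw [hS, hp]; field_simp
  have hA := dd_mgf h0 h1 w S (1 / (10 * L))
  have hB := dd_mgf h0 h1 w S 1
  rw [hnp] at hA hB
  have hA' : Real.exp (20 * L * (Real.exp (1 / (10 * L)) - 1)) ≤ 21 := by
    have hs0 : 0 ≤ 1 / (10 * L) := by positivity
    have hs1 : 1 / (10 * L) ≤ 1 / 10 := by
      apply one_div_le_one_div_of_le <;> linarith
    have hq := Real.abs_exp_sub_one_sub_id_le (x := 1 / (10 * L))
      (by rw [abs_of_nonneg hs0]; linarith)
    have hq := (abs_le.1 hq).2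
    have hq2 : Real.exp (1 / (10 * L)) - 1 ≤ 1.5 * (1 / (10 * L)) := by nlinarith
    have hq3 : 20 * L * (Real.exp (1 / (10 * L)) - 1) ≤ 3 := by
      calc _ ≤ 20 * L * (1.5 * (1 / (10 * L))) := by gcongr
        _ = 3 := by field_simp; norm_num
    calc _ ≤ Real.exp 3 := Real.exp_le_exp.2 hq3
      _ = Real.exp 1 ^ 3 := by rw [← Real.exp_nat_mul]; norm_num
      _ ≤ 2.7182818286 ^ 3 := by gcongr; exact Real.exp_one_lt_d9.le
      _ ≤ 21 := by norm_num
  have hB' : Real.exp (20 * L * (Real.exp 1 - 1)) ≤ Real.exp (40 * L) := by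
    apply Real.exp_le_exp.2
    have := Real.exp_one_lt_d9
    nlinarith
  calc _ ≤ ∫ ω, (1 + 12000 * L ^ 3 / n * Real.exp (1 / (10 * L) * dd w S ω)
        + Real.exp (-(100 * L)) * Real.exp (1 * dd w S ω)) ∂(gnp r p) := by
        apply integral_mono (gnp_int h0 h1 _) (gnp_int h0 h1 _)
        intro ω
        dsimp only
        split_ifs with h
        · exact exp_pt hL hx hD h
        · rw [mul_zero, Real.exp_zero]
          have : 0 ≤ 12000 * L ^ 3 / n * Real.exp (1 / (10 * L) * dd w S ω) := by positivity
          have : 0 ≤ Real.exp (-(100 * L)) * Real.exp (1 * dd w S ω) := by positivity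
          linarith
    _ = 1 + 12000 * L ^ 3 / n * (∫ ω, Real.exp (1 / (10 * L) * dd w S ω) ∂(gnp r p))
        + Real.exp (-(100 * L)) * (∫ ω, Real.exp (1 * dd w S ω) ∂(gnp r p)) := by
        rw [integral_add (gnp_int h0 h1 _) (gnp_int h0 h1 _),
          integral_add (gnp_int h0 h1 _) (gnp_int h0 h1 _),
          integral_const_mul, integral_const_mul]
        simp
    _ ≤ 1 + 12000 * L ^ 3 / n * 21 + Real.exp (-(100 * L)) * Real.exp (40 * L) := by
        gcongr
        · exact hA.trans hA'
        · exact hB.trans hB'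
    _ = (252000 * L ^ 3 / n + Real.exp (-(60 * L))) + 1 := by
        rw [← Real.exp_add]
        have : -(100 * L) + 40 * L = -(60 * L) := by ring
        rw [this]; ring
    _ ≤ _ := Real.add_one_le_exp _

theorem S_bound {n r : ℕ} {p L D : ℝ} (hL : 1 ≤ L) (hx : 600000 * L ^ 3 ≤ (n : ℝ))
    (hLn : L = Real.log n) (hr : (r : ℝ) ≤ (n : ℝ) ^ 2 / (10 ^ 6 * L ^ 2))
    (hD : D = (n : ℝ) / (10000 * L)) (hp : p = 20 * L / n) (h1 : p ≤ 1)
    (S : Finset (Fin r)) (hS : S.card = n) :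
    (gnp r p).real {ω | (n : ℝ) ^ 2 / 10 ≤
      ∑ w ∈ Sᶜ, (if (dd w S ω : ℝ) ≤ D then (dd w S ω : ℝ) ^ 2 / 2 else 0)} ≤
      Real.exp (-(2.5 * n * L)) := by
  have hL0 : 0 < L := by linarith
  have hn0 : (0 : ℝ) < n := lt_of_lt_of_le (by positivity) hx
  have hL3 : 1 ≤ L ^ 3 := one_le_pow₀ hL
  have h0 : 0 ≤ p := by rw [hp]; positivity
  have := gnp_prob (r := r) h0 h1
  have hm := sum_mgf h0 h1 S Sᶜ disjoint_compl_right
    (fun d : ℕ => 30 * L / n * (if (d : ℝ) ≤ D then (d : ℝ) ^ 2 / 2 else 0)) _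
    (K_bound hL hx hD hp h1 S hS)
  have hc := measure_ge_le_exp_mul_mgf (μ := gnp r p)
    (X := fun ω => ∑ w ∈ Sᶜ, (if (dd w S ω : ℝ) ≤ D then (dd w S ω : ℝ) ^ 2 / 2 else 0))
    ((n : ℝ) ^ 2 / 10) (t := 30 * L / n) (by positivity) (gnp_int h0 h1 _)
  refine hc.trans ?_
  unfold mgf
  simp_rw [Finset.mul_sum]
  refine (mul_le_mul_of_nonneg_left hm (Real.exp_pos _).le).trans ?_
  rw [← Real.exp_nat_mul, ← Real.exp_add]
  apply Real.exp_le_exp.2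
  have hcard : ((Sᶜ.card : ℕ) : ℝ) ≤ r := by
    have := Finset.card_le_univ Sᶜ
    rw [Fintype.card_fin] at this
    exact_mod_cast this
  have e1 : -(30 * L / n) * ((n : ℝ) ^ 2 / 10) = -(3 * n * L) := by field_simp; norm_num
  rw [e1]
  have e2 : (r : ℝ) * (252000 * L ^ 3 / n) ≤ 0.252 * n * L := by
    calc _ ≤ (n : ℝ) ^ 2 / (10 ^ 6 * L ^ 2) * (252000 * L ^ 3 / n) := by gcongr
      _ = _ := by field_simp; norm_num
  have hrn : (r : ℝ) ≤ (n : ℝ) ^ 2 := by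
    refine hr.trans (div_le_self (by positivity) ?_)
    nlinarith
  have e3 : (r : ℝ) * Real.exp (-(60 * L)) ≤ 1 := by
    have hexp : Real.exp L = n := by rw [hLn, Real.exp_log hn0]
    calc (r : ℝ) * Real.exp (-(60 * L)) ≤ (n : ℝ) ^ 2 * Real.exp (-(60 * L)) := by gcongr
      _ = Real.exp (2 * L + -(60 * L)) := by
        rw [Real.exp_add, ← hexp, ← Real.exp_nat_mul]; norm_num
      _ ≤ 1 := by
        rw [Real.exp_le_one_iff]; linarith
  have e4 : (Sᶜ.card : ℝ) * (252000 * L ^ 3 / n + Real.exp (-(60 * L))) ≤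
      r * (252000 * L ^ 3 / n + Real.exp (-(60 * L))) := by gcongr
  have e5 : 600000 ≤ (n : ℝ) * L := by nlinarith
  nlinarith

theorem main_bound {n r : ℕ} {p L : ℝ} (hL : 1 ≤ L) (hx : 600000 * L ^ 3 ≤ (n : ℝ))
    (hLn : L = Real.log n) (hr : (r : ℝ) ≤ (n : ℝ) ^ 2 / (10 ^ 6 * L ^ 2))
    (hp : p = 20 * L / n) :
    gnp r p {ω | ∃ S : Finset (Fin r), S.card = n ∧
          (n : ℝ) ^ 2 / 10 < (badPairCount r S ω : ℝ)} ≤ ENNReal.ofReal (2 / n) := by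
  have hL0 : 0 < L := by linarith
  have hL2 : 1 ≤ L ^ 2 := one_le_pow₀ hL
  have hL3 : L ^ 2 ≤ L ^ 3 := pow_le_pow_right₀ hL (by norm_num)
  have hn0 : (0 : ℝ) < n := lt_of_lt_of_le (by positivity) hx
  have h0 : 0 ≤ p := by rw [hp]; positivity
  have h1 : p ≤ 1 := by
    rw [hp, div_le_one hn0]; nlinarith
  have := gnp_prob (r := r) h0 h1
  obtain ⟨D, hD⟩ : ∃ D : ℝ, D = (n : ℝ) / (10000 * L) := ⟨_, rfl⟩
  have hexp : Real.exp L = n := by rw [hLn, Real.exp_log hn0]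
  have hrn : (r : ℝ) ≤ (n : ℝ) ^ 2 := by
    refine hr.trans (div_le_self (by positivity) ?_)
    nlinarith
  let B : Fin r → Set (Sym2 (Fin r) → Bool) := fun w => {ω | D ≤ (dd w Finset.univ ω : ℝ)}
  let A : Finset (Fin r) → Set (Sym2 (Fin r) → Bool) := fun S => {ω | (n : ℝ) ^ 2 / 10 ≤
      ∑ w ∈ Sᶜ, (if (dd w S ω : ℝ) ≤ D then (dd w S ω : ℝ) ^ 2 / 2 else 0)}
  have hsub : {ω | ∃ S : Finset (Fin r), S.card = n ∧
          (n : ℝ) ^ 2 / 10 < (badPairCount r S ω : ℝ)} ⊆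
      (⋃ w ∈ (Finset.univ : Finset (Fin r)), B w) ∪
        ⋃ S ∈ Finset.powersetCard n (Finset.univ : Finset (Fin r)), A S := by
    rintro ω ⟨S, hS, hb⟩
    by_cases h : ∃ w, ω ∈ B w
    · left
      simpa using h
    · right
      push Not at h
      simp only [Set.mem_iUnion]
      refine ⟨S, by simp [Finset.mem_powersetCard, hS], ?_⟩
      show (n : ℝ) ^ 2 / 10 ≤ _
      refine hb.le.trans ((bad_le S ω).trans (le_of_eq ?_))
      apply Finset.sum_congr rfl
      intro w _
      rw [if_pos]
      have h2 : (dd w Finset.univ ω : ℝ) < D := by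
        have := h w
        simpa [B] using this
      have h3 : dd w S ω ≤ dd w Finset.univ ω :=
        Finset.card_le_card (Finset.filter_subset_filter _ (Finset.subset_univ _))
      have h4 : (dd w S ω : ℝ) ≤ dd w Finset.univ ω := by exact_mod_cast h3
      linarith
  have hB : ∀ w, (gnp r p).real (B w) ≤ Real.exp (-(3 * L)) := by
    intro w
    have hc := measure_ge_le_exp_mul_mgf (μ := gnp r p)
      (X := fun ω => (dd w Finset.univ ω : ℝ)) D (t := 1) (by positivity) (gnp_int h0 h1 _)
    refine hc.trans ?_
    unfold mgf
    refine (mul_le_mul_of_nonneg_left (dd_mgf h0 h1 w Finset.univ 1) (Real.exp_pos _).le).trans ?_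
    rw [← Real.exp_add]
    apply Real.exp_le_exp.2
    rw [Finset.card_univ, Fintype.card_fin]
    have he := Real.exp_one_lt_d9
    have he' : 0 ≤ Real.exp 1 - 1 := by linarith [Real.exp_one_gt_d9]
    have q1 : (r : ℝ) * (p * (Real.exp 1 - 1)) ≤ 0.00004 * (n / L) := by
      calc _ ≤ (n : ℝ) ^ 2 / (10 ^ 6 * L ^ 2) * (20 * L / n * (Real.exp 1 - 1)) := by
            rw [hp]; gcongr
        _ ≤ (n : ℝ) ^ 2 / (10 ^ 6 * L ^ 2) * (20 * L / n * 2) := by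
            gcongr; linarith
        _ = _ := by field_simp; norm_num
    have q2 : D = 0.0001 * (n / L) := by rw [hD]; field_simp; norm_num
    have q3 : 100000 * L ≤ n / L := by
      rw [le_div_iff₀ hL0]; nlinarith
    rw [q2]
    linarith
  have hcount : ((Finset.powersetCard n (Finset.univ : Finset (Fin r))).card : ℝ) ≤
      Real.exp (2 * n * L) := by
    rw [Finset.card_powersetCard, Finset.card_univ, Fintype.card_fin]
    calc ((r.choose n : ℕ) : ℝ) ≤ (r : ℝ) ^ n := by exact_mod_cast Nat.choose_le_pow r n
      _ ≤ ((n : ℝ) ^ 2) ^ n := by gcongr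
      _ = _ := by
        rw [← hexp, ← Real.exp_nat_mul, ← Real.exp_nat_mul]
        rw [hexp]
        congr 1; push_cast; ring
  have hreal : (gnp r p).real ((⋃ w ∈ (Finset.univ : Finset (Fin r)), B w) ∪
        ⋃ S ∈ Finset.powersetCard n (Finset.univ : Finset (Fin r)), A S) ≤ 2 / n := by
    have inv : Real.exp (-L) = 1 / n := by rw [Real.exp_neg, hexp, one_div]
    refine (measureReal_union_le _ _).trans ?_
    have t1 : (gnp r p).real (⋃ w ∈ (Finset.univ : Finset (Fin r)), B w) ≤ 1 / n := by
      refine (measureReal_biUnion_finset_le _ _).trans ?_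
      refine (Finset.sum_le_card_nsmul _ _ _ fun w _ => hB w).trans ?_
      rw [Finset.card_univ, Fintype.card_fin, nsmul_eq_mul, ← inv]
      calc (r : ℝ) * Real.exp (-(3 * L)) ≤ (n : ℝ) ^ 2 * Real.exp (-(3 * L)) := by gcongr
        _ = _ := by
          rw [← hexp, ← Real.exp_nat_mul, ← Real.exp_add]
          congr 1; push_cast; ring
    have t2 : (gnp r p).real
        (⋃ S ∈ Finset.powersetCard n (Finset.univ : Finset (Fin r)), A S) ≤ 1 / n := by
      refine (measureReal_biUnion_finset_le _ _).trans ?_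
      refine (Finset.sum_le_card_nsmul _ _ _ fun S hS =>
        S_bound hL hx hLn hr hD hp h1 S (Finset.mem_powersetCard.1 hS).2).trans ?_
      rw [nsmul_eq_mul, ← inv]
      refine (mul_le_mul_of_nonneg_right hcount (Real.exp_pos _).le).trans ?_
      rw [← Real.exp_add]
      apply Real.exp_le_exp.2
      nlinarith
    calc _ ≤ (1 : ℝ) / n + 1 / n := add_le_add t1 t2
      _ = 2 / n := by ring
  refine (measure_mono hsub).trans ?_
  rw [← ofReal_measureReal]
  exact ENNReal.ofReal_le_ofReal hreal

end Helpers

theorem stmt13 :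
    Filter.Tendsto
      (fun n : ℕ => gnp (rr n) (pp n)
        {ω : Sym2 (Fin (rr n)) → Bool | ∃ S : Finset (Fin (rr n)), S.card = n ∧
          (n : ℝ) ^ 2 / 10 < (badPairCount (rr n) S ω : ℝ)})
      Filter.atTop (nhds (0 : ENNReal)) := by
  have hnat : Filter.Tendsto (fun n : ℕ => (n : ℝ)) Filter.atTop Filter.atTop :=
    tendsto_natCast_atTop_atTop
  have hlog : Filter.Tendsto (fun n : ℕ => Real.log n) Filter.atTop Filter.atTop :=
    Real.tendsto_log_atTop.comp hnat
  have hlim : Filter.Tendsto (fun n : ℕ => ENNReal.ofReal (2 / (n : ℝ))) Filter.atTop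
      (nhds (0 : ENNReal)) := by
    rw [← ENNReal.ofReal_zero]
    exact ENNReal.tendsto_ofReal (hnat.const_div_atTop 2)
  have hpow : ∀ᶠ n : ℕ in Filter.atTop, 600000 * Real.log n ^ 3 ≤ (n : ℝ) := by
    have h := (Real.isLittleO_pow_log_id_atTop (n := 3)).bound
      (show (0 : ℝ) < 1 / 600000 by norm_num)
    filter_upwards [hnat.eventually h] with n hn
    simp only [id, Real.norm_eq_abs, Nat.abs_cast] at hn
    have := le_abs_self (Real.log n ^ 3)
    linarith
  refine tendsto_of_tendsto_of_tendsto_of_le_of_le' tendsto_const_nhds hlim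
    (Filter.Eventually.of_forall fun _ => zero_le) ?_
  filter_upwards [hpow, hlog.eventually_ge_atTop 1] with n hn hL
  exact main_bound hL hn rfl (Nat.floor_le (by positivity)) rfl

end OnlineRamseyGame
end
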